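/- Let α ∈ ℂ∖ℤ and let V be a weight module over Ū all of whose H-eigenvalues lie in the coset α + 2ℤ. Then V is isomorphic to a finite direct sum of simple weight modules (in fact of simple Verma modules). -/

import Mathlib

noncomputable section

open scoped TensorProduct

namespace Unrolled

/-- `q^z = exp(π √-1 z / r)`. -/
def qc (r : ℕ) (z : ℂ) : ℂ := Complex.exp (Real.pi * Complex.I * z / r)

/-- `{z} = q^z - q^{-z}`. -/
def qbrk (r : ℕ) (z : ℂ) : ℂ := qc r z - qc r (-z)

/-- `[z] = {z}/{1}`. -/
def qint (r : ℕ) (z : ℂ) : ℂ := qbrk r z / qbrk r 1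

/-- `{n}! = ∏_{i=1}^n {i}`. -/
def qbrkFact (r n : ℕ) : ℂ := ∏ i ∈ Finset.range n, qbrk r ((i : ℂ) + 1)

/-- `[n]! = ∏_{i=1}^n [i]`. -/
def qintFact (r n : ℕ) : ℂ := ∏ i ∈ Finset.range n, qint r ((i : ℂ) + 1)

/-- The data of five operators `K, K⁻¹, H, E, F` on a complex vector space. -/
structure Ops (V : Type) [AddCommGroup V] [Module ℂ V] where
  K : Module.End ℂ V
  Kinv : Module.End ℂ V
  H : Module.End ℂ V
  E : Module.End ℂ V
  F : Module.End ℂ V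

/-- A module over the restricted unrolled quantum group `Ū = Ū_q^H(sl₂(ℂ))`:
five operators satisfying the defining relations of `Ū`. -/
structure Rep (r : ℕ) (V : Type) [AddCommGroup V] [Module ℂ V] extends Ops V where
  rel_KKinv : K * Kinv = 1
  rel_KinvK : Kinv * K = 1
  rel_HK : H * K = K * H
  rel_HE : H * E - E * H = (2 : ℂ) • E
  rel_HF : H * F - F * H = (-2 : ℂ) • F
  rel_KE : K * E = qc r 2 • (E * K)
  rel_KF : K * F = qc r (-2) • (F * K)
  rel_EF : E * F - F * E = (qbrk r 1)⁻¹ • (K - Kinv)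
  rel_Er : E ^ r = 0
  rel_Fr : F ^ r = 0

variable {V W U : Type} [AddCommGroup V] [Module ℂ V] [AddCommGroup W] [Module ℂ W]
  [AddCommGroup U] [Module ℂ U]

/-- A `Ū`-submodule: a subspace invariant under the five operators. -/
def Ops.Invariant (A : Ops V) (p : Submodule ℂ V) : Prop :=
  (∀ v ∈ p, A.K v ∈ p) ∧ (∀ v ∈ p, A.Kinv v ∈ p) ∧ (∀ v ∈ p, A.H v ∈ p) ∧
    (∀ v ∈ p, A.E v ∈ p) ∧ (∀ v ∈ p, A.F v ∈ p)

/-- A simple `Ū`-module: nonzero, with no nonzero proper invariant subspace. -/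
def Ops.IsSimple (A : Ops V) : Prop :=
  (∃ v : V, v ≠ 0) ∧ ∀ p : Submodule ℂ V, A.Invariant p → p = ⊥ ∨ p = ⊤

/-- A weight module: finite dimensional, a direct sum of `H`-eigenspaces, on which `K`
acts by `q^μ` on the `H`-eigenspace of eigenvalue `μ`. -/
structure IsWeight (r : ℕ) {V : Type} [AddCommGroup V] [Module ℂ V] (A : Ops V) : Prop where
  finDim : FiniteDimensional ℂ V
  sup_eigenspaces : (⨆ μ : ℂ, Module.End.eigenspace A.H μ) = ⊤
  K_apply : ∀ (μ : ℂ), ∀ v ∈ Module.End.eigenspace A.H μ, A.K v = qc r μ • v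

/-- A `Ū`-linear map. -/
def IsEquivariant (A : Ops V) (B : Ops W) (f : V →ₗ[ℂ] W) : Prop :=
  (∀ v, f (A.K v) = B.K (f v)) ∧ (∀ v, f (A.Kinv v) = B.Kinv (f v)) ∧
    (∀ v, f (A.H v) = B.H (f v)) ∧ (∀ v, f (A.E v) = B.E (f v)) ∧
    (∀ v, f (A.F v) = B.F (f v))

/-- Isomorphism of `Ū`-modules. -/
def OpsIso (A : Ops V) (B : Ops W) : Prop :=
  ∃ e : V ≃ₗ[ℂ] W, IsEquivariant A B (e : V →ₗ[ℂ] W)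

/-- The weight `α + r - 1 - 2i` of the basis vector `v_i` of the Verma module `V_α`. -/
def wt (r : ℕ) (α : ℂ) (i : ℕ) : ℂ := α + r - 1 - 2 * i

/-- The coefficient `{i}{i-α}/{1}²` occurring in `E v_i`. -/
def cE (r : ℕ) (α : ℂ) (i : ℕ) : ℂ := qbrk r i * qbrk r ((i : ℂ) - α) / qbrk r 1 ^ 2

/-- The Verma module `V_α` of highest weight `α + r - 1`, realized on `Fin r → ℂ`
with basis `v_0, …, v_{r-1}`. -/
def vermaOps (r : ℕ) (α : ℂ) : Ops (Fin r → ℂ) where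
  K := (Matrix.diagonal fun i : Fin r => qc r (wt r α (i : ℕ))).mulVecLin
  Kinv := (Matrix.diagonal fun i : Fin r => qc r (-wt r α (i : ℕ))).mulVecLin
  H := (Matrix.diagonal fun i : Fin r => wt r α (i : ℕ)).mulVecLin
  E := (Matrix.of fun i j : Fin r =>
    if (j : ℕ) = (i : ℕ) + 1 then cE r α (j : ℕ) else 0).mulVecLin
  F := (Matrix.of fun i j : Fin r =>
    if (i : ℕ) = (j : ℕ) + 1 then (1 : ℂ) else 0).mulVecLin

/-- `α_{l,n} = (l-1)r + n + 1`, so that `S_n^{lr}` is a quotient of `V_{α_{l,n}}`. -/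
def aln (r : ℕ) (l : ℤ) (n : ℕ) : ℂ := ((l : ℂ) - 1) * r + n + 1

/-- The simple module `S_n^{lr}` of highest weight `lr + n` and dimension `n+1`,
realized on `Fin (n+1) → ℂ`. -/
def smodOps (r : ℕ) (l : ℤ) (n : ℕ) : Ops (Fin (n + 1) → ℂ) where
  K := (Matrix.diagonal fun i : Fin (n + 1) => qc r (wt r (aln r l n) (i : ℕ))).mulVecLin
  Kinv := (Matrix.diagonal fun i : Fin (n + 1) => qc r (-wt r (aln r l n) (i : ℕ))).mulVecLin
  H := (Matrix.diagonal fun i : Fin (n + 1) => wt r (aln r l n) (i : ℕ)).mulVecLin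
  E := (Matrix.of fun i j : Fin (n + 1) =>
    if (j : ℕ) = (i : ℕ) + 1 then cE r (aln r l n) (j : ℕ) else 0).mulVecLin
  F := (Matrix.of fun i j : Fin (n + 1) =>
    if (i : ℕ) = (j : ℕ) + 1 then (1 : ℂ) else 0).mulVecLin

/-- `α ∈ (ℂ∖ℤ) ∪ rℤ`. -/
def goodα (r : ℕ) (α : ℂ) : Prop := (¬∃ n : ℤ, α = (n : ℂ)) ∨ ∃ m : ℤ, α = (r : ℂ) * m

/-- The direct sum `Ū`-module structure on a product. -/
def piOps {ι : Type} {Vf : ι → Type} [∀ i, AddCommGroup (Vf i)] [∀ i, Module ℂ (Vf i)]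
    (A : ∀ i, Ops (Vf i)) : Ops (∀ i, Vf i) where
  K := LinearMap.pi fun i => (A i).K ∘ₗ LinearMap.proj i
  Kinv := LinearMap.pi fun i => (A i).Kinv ∘ₗ LinearMap.proj i
  H := LinearMap.pi fun i => (A i).H ∘ₗ LinearMap.proj i
  E := LinearMap.pi fun i => (A i).E ∘ₗ LinearMap.proj i
  F := LinearMap.pi fun i => (A i).F ∘ₗ LinearMap.proj i

lemma qc_add (r : ℕ) (a b : ℂ) : qc r (a + b) = qc r a * qc r b := by
  unfold qc
  rw [← Complex.exp_add]
  congr 1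
  ring

lemma qc_ne (r : ℕ) (a : ℂ) : qc r a ≠ 0 := Complex.exp_ne_zero _

lemma qc_neg (r : ℕ) (a : ℂ) : qc r (-a) = (qc r a)⁻¹ := by
  unfold qc
  rw [← Complex.exp_neg]
  congr 1
  ring

lemma qc_r (r : ℕ) (hr : 2 ≤ r) : qc r r = -1 := by
  unfold qc
  have : (r : ℂ) ≠ 0 := by
    have : r ≠ 0 := by omega
    exact_mod_cast this
  rw [mul_div_assoc, div_self this, mul_one, Complex.exp_pi_mul_I]

lemma qbrk_eq_zero (r : ℕ) (hr : 2 ≤ r) (z : ℂ) (h : qbrk r z = 0) :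
    ∃ n : ℤ, z = r * n := by
  unfold qbrk qc at h
  rw [sub_eq_zero, Complex.exp_eq_exp_iff_exists_int] at h
  obtain ⟨n, hn⟩ := h
  refine ⟨n, ?_⟩
  have h0 : (r : ℂ) ≠ 0 := by
    have : r ≠ 0 := by omega
    exact_mod_cast this
  have hpi : (Real.pi : ℂ) ≠ 0 := by exact_mod_cast Real.pi_ne_zero
  have hI := Complex.I_ne_zero
  field_simp at hn
  linear_combination hn / 2

lemma qbrk_nat_ne (r : ℕ) (hr : 2 ≤ r) (i : ℕ) (h0 : 0 < i) (h1 : i < r) :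
    qbrk r i ≠ 0 := by
  intro h
  obtain ⟨n, hn⟩ := qbrk_eq_zero r hr _ h
  have hn' : (i : ℤ) = r * n := by exact_mod_cast hn
  have : (r : ℤ) ∣ i := ⟨n, hn'⟩
  have := Int.le_of_dvd (by omega) this
  omega

lemma cE_ne (r : ℕ) (hr : 2 ≤ r) (β : ℂ) (hβ : ¬∃ n : ℤ, β = (n : ℂ)) (i : ℕ)
    (h0 : 0 < i) (h1 : i < r) : cE r β i ≠ 0 := by
  unfold cE
  have h3 : qbrk r 1 ≠ 0 := by
    have := qbrk_nat_ne r hr 1 (by omega) (by omega)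
    simpa using this
  have h4 : qbrk r ((i : ℂ) - β) ≠ 0 := by
    intro h
    obtain ⟨n, hn⟩ := qbrk_eq_zero r hr _ h
    apply hβ
    refine ⟨i - r * n, ?_⟩
    push_cast
    linear_combination -hn
  have := qbrk_nat_ne r hr i h0 h1
  positivity

lemma cE_zero (r : ℕ) (β : ℂ) : cE r β 0 = 0 := by
  simp [cE, qbrk]

lemma cE_succ (r : ℕ) (hr : 2 ≤ r) (β : ℂ) (i : ℕ) :
    cE r β (i + 1) = cE r β i + (qbrk r 1)⁻¹ * (qc r (wt r β i) - qc r (-wt r β i)) := by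
  have h3 : qbrk r 1 ≠ 0 := by
    have := qbrk_nat_ne r hr 1 (by omega) (by omega)
    simpa using this
  have key : qbrk r ((i + 1 : ℕ) : ℂ) * qbrk r (((i + 1 : ℕ) : ℂ) - β)
      = qbrk r i * qbrk r ((i : ℂ) - β)
        + qbrk r 1 * (qc r (wt r β i) - qc r (-wt r β i)) := by
    have e1 : wt r β i = β + r + (-1) + (-i) + (-i) := by unfold wt; ring
    have e2 : ((i + 1 : ℕ) : ℂ) - β = i + 1 + (-β) := by push_cast; ring
    have e3 : (i : ℂ) - β = i + (-β) := by ring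
    unfold qbrk
    rw [e1, e2, e3]
    push_cast
    simp only [qc_neg, qc_add, qc_r r hr]
    have := qc_ne r i
    have := qc_ne r 1
    have := qc_ne r β
    field_simp
    ring
  unfold cE
  rw [key]
  field_simp

lemma verma_E_apply (r : ℕ) (β : ℂ) (x : Fin r → ℂ) (i : Fin r) :
    (vermaOps r β).E x i = if h : (i : ℕ) + 1 < r then cE r β (i + 1) * x ⟨i + 1, h⟩ else 0 := by
  simp only [vermaOps, Matrix.mulVecLin_apply, Matrix.mulVec, dotProduct, Matrix.of_apply,
    ite_mul, zero_mul]
  split_ifs with h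
  · rw [Finset.sum_eq_single ⟨i + 1, h⟩]
    · simp
    · intro b _ hb
      rw [if_neg]
      intro h'
      exact hb (Fin.ext h')
    · simp
  · apply Finset.sum_eq_zero
    intro b _
    rw [if_neg]
    have := b.2
    omega

lemma verma_E_nil (r : ℕ) (β : ℂ) (k : ℕ) (x : Fin r → ℂ) (i : Fin r) (h : r ≤ i + k) :
    ((vermaOps r β).E ^ k) x i = 0 := by
  induction k generalizing i with
  | zero => have := i.2; omega
  | succ k ih =>
    rw [pow_succ', Module.End.mul_apply, verma_E_apply]
    split_ifs with h'
    · rw [ih ⟨i + 1, h'⟩ (by simp only; omega), mul_zero]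
    · rfl

lemma verma_E_ker (r : ℕ) (hr : 2 ≤ r) (β : ℂ) (hβ : ¬∃ n : ℤ, β = (n : ℂ))
    (x : Fin r → ℂ) (hx : (vermaOps r β).E x = 0) (i : Fin r) (hi : 0 < (i : ℕ)) : x i = 0 := by
  have h1 : (i : ℕ) - 1 < r := by have := i.2; omega
  have h := congrFun hx ⟨i - 1, h1⟩
  rw [verma_E_apply] at h
  have h2 : (i : ℕ) - 1 + 1 = i := by omega
  simp only [h2, i.2, dite_true, Pi.zero_apply, Fin.eta] at h
  rcases mul_eq_zero.1 h with h | h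
  · exact absurd h (by
      have := cE_ne r hr β hβ i hi i.2
      convert this using 2)
  · exact h

lemma exists_ker {W : Type} [AddCommGroup W] [Module ℂ W] (T : Module.End ℂ W) (n : ℕ)
    (p : Submodule ℂ W) (hp : ∀ v ∈ p, T v ∈ p) (x : W) (hx : x ∈ p) (h0 : x ≠ 0)
    (hT : (T ^ n) x = 0) :
    ∃ y ∈ p, y ≠ 0 ∧ T y = 0 := by
  induction n generalizing x with
  | zero => exact absurd (by simpa using hT) h0
  | succ n ih =>
    by_cases h : T x = 0
    · exact ⟨x, hx, h0, h⟩
    · refine ih (T x) (hp x hx) h ?_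
      rwa [pow_succ, Module.End.mul_apply] at hT

lemma verma_F_single (r : ℕ) (β : ℂ) (i : ℕ) (h : i + 1 < r) :
    (vermaOps r β).F (Pi.single ⟨i, by omega⟩ 1) = Pi.single ⟨i + 1, h⟩ 1 := by
  simp only [vermaOps, Matrix.mulVecLin_apply, Matrix.mulVec_single_one]
  ext j
  simp [Matrix.col, Pi.single_apply, Fin.ext_iff]

lemma verma_simple (r : ℕ) (hr : 2 ≤ r) (β : ℂ) (hβ : ¬∃ n : ℤ, β = (n : ℂ)) :
    (vermaOps r β).IsSimple := by
  have hr0 : 0 < r := by omega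
  refine ⟨⟨Pi.single ⟨0, hr0⟩ 1, by simp⟩, ?_⟩
  intro p ⟨_, _, _, hE, hF⟩
  by_cases hp : p = ⊥
  · exact Or.inl hp
  right
  obtain ⟨x, hx, h0⟩ := p.ne_bot_iff.1 hp
  obtain ⟨y, hy, hy0, hEy⟩ := exists_ker _ r p hE x hx h0 (by
    ext i; exact verma_E_nil r β r x i (by omega))
  have hy1 := verma_E_ker r hr β hβ y hEy
  have hys : y = y ⟨0, hr0⟩ • Pi.single ⟨0, hr0⟩ 1 := by
    ext i
    by_cases hi : (i : ℕ) = 0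
    · have : i = ⟨0, hr0⟩ := Fin.ext hi
      subst this
      simp
    · rw [hy1 i (by omega)]
      have : i ≠ ⟨0, hr0⟩ := fun h => hi (by rw [h])
      simp [this]
  have hc : y ⟨0, hr0⟩ ≠ 0 := by
    intro h
    rw [h, zero_smul] at hys
    exact hy0 hys
  have hv0 : (Pi.single ⟨0, hr0⟩ 1 : Fin r → ℂ) ∈ p := by
    rw [hys] at hy
    exact (p.smul_mem_iff hc).1 hy
  have hv : ∀ i : ℕ, ∀ h : i < r, (Pi.single ⟨i, h⟩ 1 : Fin r → ℂ) ∈ p := by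
    intro i
    induction i with
    | zero => intro _; exact hv0
    | succ i ih =>
      intro h
      rw [← verma_F_single r β i h]
      exact hF _ (ih (by omega))
  rw [eq_top_iff]
  intro z _
  rw [pi_eq_sum_univ' z]
  refine p.sum_mem fun i _ => p.smul_mem _ ?_
  have := hv i i.2
  convert this using 1

/-- the map from the Verma module determined by `w`. -/
def phi (r : ℕ) (A : Ops V) (w : V) : (Fin r → ℂ) →ₗ[ℂ] V :=
  ∑ i : Fin r, (LinearMap.proj i : (Fin r → ℂ) →ₗ[ℂ] ℂ).smulRight ((A.F ^ (i : ℕ)) w)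

lemma phi_apply (r : ℕ) (A : Ops V) (w : V) (x : Fin r → ℂ) :
    phi r A w x = ∑ i : Fin r, x i • (A.F ^ (i : ℕ)) w := by
  simp [phi]

lemma F_weight {r : ℕ} (ρ : Rep r V) (μ : ℂ) (w : V) (hw : ρ.H w = μ • w) (i : ℕ) :
    ρ.H ((ρ.F ^ i) w) = (μ - 2 * i) • (ρ.F ^ i) w := by
  induction i with
  | zero => simpa using hw
  | succ i ih =>
    have h := LinearMap.congr_fun ρ.rel_HF ((ρ.F ^ i) w)
    simp only [LinearMap.sub_apply, Module.End.mul_apply, LinearMap.smul_apply, ih,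
      map_smul] at h
    rw [pow_succ', Module.End.mul_apply, sub_eq_iff_eq_add.1 h, ← add_smul]
    congr 1
    push_cast
    ring

section
variable {r : ℕ} (hr : 2 ≤ r) (ρ : Rep r V) (hw : IsWeight r ρ.toOps) (β : ℂ) (w : V)
  (hH : ρ.H w = (β + r - 1) • w) (hE : ρ.E w = 0)

lemma H_F (hH : ρ.H w = (β + r - 1) • w) (i : ℕ) :
    ρ.H ((ρ.F ^ i) w) = wt r β i • (ρ.F ^ i) w := F_weight ρ _ w hH i

lemma K_F (hw : IsWeight r ρ.toOps) (hH : ρ.H w = (β + r - 1) • w) (i : ℕ) :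
    ρ.K ((ρ.F ^ i) w) = qc r (wt r β i) • (ρ.F ^ i) w :=
  hw.K_apply _ _ (Module.End.mem_eigenspace_iff.2 (H_F ρ β w hH i))

lemma Kinv_F (hw : IsWeight r ρ.toOps) (hH : ρ.H w = (β + r - 1) • w) (i : ℕ) :
    ρ.Kinv ((ρ.F ^ i) w) = qc r (-wt r β i) • (ρ.F ^ i) w := by
  have h := LinearMap.congr_fun ρ.rel_KinvK ((ρ.F ^ i) w)
  rw [Module.End.mul_apply, K_F ρ β w hw hH, map_smul, Module.End.one_apply] at h
  rw [qc_neg]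
  conv_rhs => rw [← h]
  rw [smul_smul, inv_mul_cancel₀ (qc_ne _ _), one_smul]

lemma E_F (hr : 2 ≤ r) (hw : IsWeight r ρ.toOps) (hH : ρ.H w = (β + r - 1) • w)
    (hE : ρ.E w = 0) (i : ℕ) :
    ρ.E ((ρ.F ^ (i + 1)) w) = cE r β (i + 1) • (ρ.F ^ i) w := by
  have h := LinearMap.congr_fun ρ.rel_EF ((ρ.F ^ i) w)
  simp only [LinearMap.sub_apply, Module.End.mul_apply, LinearMap.smul_apply,
    K_F ρ β w hw hH, Kinv_F ρ β w hw hH] at h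
  rw [pow_succ', Module.End.mul_apply, sub_eq_iff_eq_add.1 h, ← sub_smul, smul_smul,
    cE_succ r hr, add_comm (cE r β i), add_smul]
  congr 1
  cases i with
  | zero => simp [hE, cE_zero]
  | succ i =>
    rw [E_F hr hw hH hE i, map_smul, ← Module.End.mul_apply, ← pow_succ']

lemma phi_single (i : Fin r) : phi r ρ.toOps w (Pi.single i 1) = (ρ.F ^ (i : ℕ)) w := by
  rw [phi_apply, Finset.sum_eq_single i]
  · simp
  · intro b _ hb
    simp [hb]
  · simp

lemma phi_equiv (hr : 2 ≤ r) (hw : IsWeight r ρ.toOps) (hH : ρ.H w = (β + r - 1) • w)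
    (hE : ρ.E w = 0) : IsEquivariant (vermaOps r β) ρ.toOps (phi r ρ.toOps w) := by
  have diag : ∀ (T : Module.End ℂ V) (d : Fin r → ℂ),
      (∀ i : Fin r, T ((ρ.F ^ (i : ℕ)) w) = d i • (ρ.F ^ (i : ℕ)) w) →
      ∀ v, phi r ρ.toOps w ((Matrix.diagonal d).mulVecLin v) = T (phi r ρ.toOps w v) := by
    intro T d h v
    simp only [phi_apply, map_sum, map_smul, h, Matrix.mulVecLin_apply, Matrix.mulVec_diagonal,
      smul_smul]
    refine Finset.sum_congr rfl fun i _ => ?_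
    rw [mul_comm]
  refine ⟨diag _ _ fun i => K_F ρ β w hw hH i, diag _ _ fun i => Kinv_F ρ β w hw hH i,
    diag _ _ fun i => H_F ρ β w hH i, ?_, ?_⟩
  · suffices h : (phi r ρ.toOps w) ∘ₗ (vermaOps r β).E = ρ.E ∘ₗ phi r ρ.toOps w from
      LinearMap.congr_fun h
    refine LinearMap.pi_ext' fun j => LinearMap.ext_ring ?_
    simp only [LinearMap.comp_apply, LinearMap.coe_single, phi_single]
    rw [phi_apply]
    obtain ⟨j, hj⟩ := j
    cases j with
    | zero =>
      simp only [pow_zero, Module.End.one_apply, hE]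
      refine Finset.sum_eq_zero fun i _ => ?_
      rw [verma_E_apply]
      split_ifs with h <;> simp [Pi.single_apply]
    | succ j =>
      rw [E_F ρ β w hr hw hH hE, Finset.sum_eq_single ⟨j, by omega⟩]
      · rw [verma_E_apply]
        simp [hj]
      · intro b _ hb
        rw [verma_E_apply]
        have : (b : ℕ) ≠ j := fun h => hb (Fin.ext h)
        split_ifs with h <;> simp [Pi.single_apply, this]
      · simp
  · suffices h : (phi r ρ.toOps w) ∘ₗ (vermaOps r β).F = ρ.F ∘ₗ phi r ρ.toOps w from
      LinearMap.congr_fun h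
    refine LinearMap.pi_ext' fun j => LinearMap.ext_ring ?_
    simp only [LinearMap.comp_apply, LinearMap.coe_single, phi_single]
    rw [← Module.End.mul_apply, ← pow_succ']
    by_cases h : (j : ℕ) + 1 < r
    · have := verma_F_single r β j h
      rw [Fin.eta] at this
      rw [this, phi_single]
    · have hjr : (j : ℕ) + 1 = r := by have := j.2; omega
      rw [hjr, ρ.rel_Fr, LinearMap.zero_apply]
      convert map_zero (phi r ρ.toOps w)
      simp only [vermaOps, Matrix.mulVecLin_apply, Matrix.mulVec_single_one]
      ext i
      have := i.2
      simp [Matrix.col]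
      omega

end

lemma finrank_ker_pow [FiniteDimensional ℂ V] (T : Module.End ℂ V) (n : ℕ) :
    Module.finrank ℂ (LinearMap.ker (T ^ n)) ≤ n * Module.finrank ℂ (LinearMap.ker T) := by
  induction n with
  | zero =>
    simp [Module.End.one_eq_id, LinearMap.ker_id]
  | succ n ih =>
    let g : LinearMap.ker (T ^ (n + 1)) →ₗ[ℂ] LinearMap.ker T :=
      ((T ^ n).domRestrict (LinearMap.ker (T ^ (n + 1)))).codRestrict (LinearMap.ker T) (by
        rintro ⟨x, hx⟩
        rw [LinearMap.mem_ker, pow_succ', Module.End.mul_apply] at hx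
        simpa using hx)
    have h1 := LinearMap.finrank_range_add_finrank_ker g
    have h2 : Module.finrank ℂ (LinearMap.range g) ≤ Module.finrank ℂ (LinearMap.ker T) :=
      Submodule.finrank_le _
    have h3 : Module.finrank ℂ (LinearMap.ker g) ≤ Module.finrank ℂ (LinearMap.ker (T ^ n)) := by
      let f : LinearMap.ker g →ₗ[ℂ] LinearMap.ker (T ^ n) :=
        ((Submodule.subtype _) ∘ₗ (Submodule.subtype _)).codRestrict _ (by
          intro x
          have := x.2
          rw [LinearMap.mem_ker] at this
          have h := congrArg (Subtype.val : LinearMap.ker T → V) this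
          exact h)
      refine LinearMap.finrank_le_finrank_of_injective (f := f) ?_
      intro a b hab
      apply Subtype.ext
      apply Subtype.ext
      have h := congrArg (Subtype.val : LinearMap.ker (T ^ n) → V) hab
      exact h
    rw [add_mul, one_mul]
    omega


/-- A weight module all of whose `H`-eigenvalues lie in `α + 2ℤ` with `α ∉ ℤ` is a
finite direct sum of simple Verma modules. -/
theorem stmt7 (r : ℕ) (hr : 2 ≤ r) (α : ℂ) (hα : ¬∃ n : ℤ, α = (n : ℂ))
    (ρ : Rep r V) (hw : IsWeight r ρ.toOps)
    (hcoset : ∀ μ : ℂ, Module.End.eigenspace ρ.H μ ≠ ⊥ → ∃ k : ℤ, μ = α + 2 * k) :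
    ∃ (m : ℕ) (β : Fin m → ℂ), (∀ i, (vermaOps r (β i)).IsSimple) ∧
      OpsIso ρ.toOps (piOps fun i : Fin m => vermaOps r (β i)) := by
  have hfd := hw.finDim
  have hkH : ∀ x ∈ LinearMap.ker ρ.E, ρ.H x ∈ LinearMap.ker ρ.E := by
    intro x hx
    rw [LinearMap.mem_ker] at hx ⊢
    have h := LinearMap.congr_fun ρ.rel_HE x
    simpa [hx] using h
  have hk : LinearMap.ker ρ.E = ⨆ μ : ℂ, LinearMap.ker ρ.E ⊓ Module.End.eigenspace ρ.H μ :=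
    Submodule.eq_iSup_inf_genEigenspace 1 hkH hw.sup_eigenspaces
  let S : Set V := {v | ρ.E v = 0 ∧ ∃ μ : ℂ, ρ.H v = μ • v}
  have hS : Submodule.span ℂ S = LinearMap.ker ρ.E := by
    apply le_antisymm
    · rw [Submodule.span_le]
      intro v hv
      exact hv.1
    · rw [hk]
      refine iSup_le fun μ v hv => Submodule.subset_span ?_
      exact ⟨hv.1, μ, Module.End.mem_eigenspace_iff.1 hv.2⟩
  obtain ⟨b, hbS, hbspan, hli⟩ := exists_linearIndependent ℂ S
  have hfin : Finite b := hli.finite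
  obtain ⟨m, ⟨e⟩⟩ := Finite.exists_equiv_fin b
  let w : Fin m → V := fun i => (e.symm i : V)
  have hwli : LinearIndependent ℂ w := hli.comp _ e.symm.injective
  have hwS : ∀ i, w i ∈ S := fun i => hbS (e.symm i).2
  have hrange : Set.range w = b := by
    ext x
    constructor
    · rintro ⟨i, rfl⟩; exact (e.symm i).2
    · intro hx; exact ⟨e ⟨x, hx⟩, by simp [w]⟩
  have hdim : Module.finrank ℂ (LinearMap.ker ρ.E) = m := by
    rw [← hS, ← hbspan, ← hrange, finrank_span_eq_card hwli, Fintype.card_fin]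
  choose hwE μ hwμ using hwS
  have hβ : ∀ i, ¬∃ n : ℤ, μ i - r + 1 = (n : ℂ) := by
    rintro i ⟨n, hn⟩
    obtain ⟨k, hk⟩ := hcoset (μ i) (by
      rw [Submodule.ne_bot_iff]
      exact ⟨w i, Module.End.mem_eigenspace_iff.2 (hwμ i), hwli.ne_zero i⟩)
    refine hα ⟨n + r - 1 - 2 * k, ?_⟩
    push_cast
    linear_combination hn - hk
  have heq : ∀ i, IsEquivariant (vermaOps r (μ i - r + 1)) ρ.toOps (phi r ρ.toOps (w i)) :=
    fun i => phi_equiv ρ _ _ hr hw (by rw [hwμ]; congr 1; ring) (hwE i)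
  refine ⟨m, fun i => μ i - r + 1, fun i => verma_simple r hr _ (hβ i), ?_⟩
  let Φ : (Fin m → Fin r → ℂ) →ₗ[ℂ] V := ∑ j, phi r ρ.toOps (w j) ∘ₗ LinearMap.proj j
  have hΦ : ∀ x, Φ x = ∑ j, phi r ρ.toOps (w j) (x j) := by
    intro x; simp [Φ]
  let P : Ops (Fin m → Fin r → ℂ) := piOps fun i : Fin m => vermaOps r (μ i - r + 1)
  have hΦeq : IsEquivariant P ρ.toOps Φ := by
    refine ⟨?_, ?_, ?_, ?_, ?_⟩ <;> intro v <;> rw [hΦ, hΦ, map_sum] <;>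
      refine Finset.sum_congr rfl fun j _ => ?_
    · exact (heq j).1 _
    · exact (heq j).2.1 _
    · exact (heq j).2.2.1 _
    · exact (heq j).2.2.2.1 _
    · exact (heq j).2.2.2.2 _
  have hPpow : ∀ (k : ℕ) x j, (P.E ^ k) x j = ((vermaOps r (μ j - r + 1)).E ^ k) (x j) := by
    intro k
    induction k with
    | zero => intro x j; rfl
    | succ k ih =>
      intro x j
      rw [pow_succ, pow_succ, Module.End.mul_apply, Module.End.mul_apply, ih]
      rfl
  have hinj : Function.Injective Φ := by
    rw [← LinearMap.ker_eq_bot]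
    by_contra hne
    obtain ⟨x, hx, hx0⟩ := (Submodule.ne_bot_iff _).1 hne
    obtain ⟨y, hy, hy0, hEy⟩ := exists_ker P.E r (LinearMap.ker Φ) (by
      intro v hv
      rw [LinearMap.mem_ker] at hv ⊢
      rw [hΦeq.2.2.2.1, hv, map_zero]) x hx hx0 (by
      ext j i
      rw [hPpow]
      exact verma_E_nil r _ r _ i (by omega))
    have hr0 : 0 < r := by omega
    have hyi : ∀ j (i : Fin r), 0 < (i : ℕ) → y j i = 0 := fun j i hi =>
      verma_E_ker r hr _ (hβ j) (y j) (congrFun hEy j) i hi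
    rw [LinearMap.mem_ker, hΦ] at hy
    have h1 : ∀ j, phi r ρ.toOps (w j) (y j) = y j ⟨0, hr0⟩ • w j := by
      intro j
      rw [phi_apply, Finset.sum_eq_single ⟨0, hr0⟩]
      · simp
      · intro i _ hi
        have : (i : ℕ) ≠ 0 := fun h => hi (Fin.ext h)
        rw [hyi j i (by omega), zero_smul]
      · simp
    simp only [h1] at hy
    have h2 := Fintype.linearIndependent_iff.1 hwli _ hy
    apply hy0
    ext j i
    by_cases hi : (i : ℕ) = 0
    · have : i = ⟨0, hr0⟩ := Fin.ext hi
      rw [this]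
      exact h2 j
    · exact hyi j i (by omega)
  have hle : Module.finrank ℂ V ≤ r * m := by
    have h := finrank_ker_pow ρ.E r
    rw [ρ.rel_Er, LinearMap.ker_zero, finrank_top, hdim] at h
    exact h
  have hge := LinearMap.finrank_le_finrank_of_injective hinj
  have hW : Module.finrank ℂ (Fin m → Fin r → ℂ) = r * m := by
    simp [Module.finrank_pi_fintype, mul_comm]
  have hsurj : Function.Surjective Φ :=
    (LinearMap.injective_iff_surjective_of_finrank_eq_finrank (by omega)).1 hinj
  let e' := LinearEquiv.ofBijective Φ ⟨hinj, hsurj⟩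
  have he : ∀ x, e' x = Φ x := fun x => rfl
  refine ⟨e'.symm, ?_⟩
  have sy : ∀ (T : Module.End ℂ V) (T' : Module.End ℂ (Fin m → Fin r → ℂ)),
      (∀ v, Φ (T' v) = T (Φ v)) → ∀ v, e'.symm (T v) = T' (e'.symm v) := by
    intro T T' h v
    rw [LinearEquiv.symm_apply_eq, he, h, ← he, LinearEquiv.apply_symm_apply]
  exact ⟨sy _ _ hΦeq.1, sy _ _ hΦeq.2.1, sy _ _ hΦeq.2.2.1, sy _ _ hΦeq.2.2.2.1,
    sy _ _ hΦeq.2.2.2.2⟩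

end Unrolled
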